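/- Assume θ < -1, and b ≥ 0, c ≥ 0 on Ω. Let h be a boundary datum with h > 0 on ∂Ω, set h̄ := sup_{∂Ω} h and ν := -θ h̄^{-(1+θ)}. Let Ψ ∈ C²(Ω) ∩ C¹(cl(Ω)) be a classical solution of ∇·(a∇Ψ) = bΨ + cΨ^{-θ} in Ω with Ψ = h on ∂Ω and 0 < Ψ ≤ h̄ on cl(Ω). Let Ψ₀ ∈ C²(Ω) ∩ C¹(cl(Ω)) satisfy -∇·(a∇Ψ₀) + (b + cν)Ψ₀ = 0 in Ω with Ψ₀ = h on ∂Ω and 0 ≤ Ψ₀ ≤ h̄ on cl(Ω), and for each n ≥ 1 let Ψ_n ∈ C²(Ω) ∩ C¹(cl(Ω)) with Ψ_n ≥ 0 satisfy -∇·(a∇Ψ_n) + (b + cν)Ψ_n = -c(Ψ_{n-1}^{-θ} - νΨ_{n-1}) in Ω with Ψ_n = h on ∂Ω. Then for every n ≥ 0 one has Ψ_n ≤ Ψ_{n+1} ≤ Ψ in Ω; consequently, for every x ∈ Ω the sequence (Ψ_n(x)) is nondecreasing, bounded above by Ψ(x), and convergent. -/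

import Mathlib

/-!
The iterates are compared with one another and with the solution by a weak maximum principle for
`∇·(a∇·)` (`comparison`): if `u = v` on the boundary and `∇·(a∇v) ≤ ∇·(a∇u)` wherever `u > v`,
then `u ≤ v`. Otherwise `u - v + ε exp (lam * x₀)`, with `lam` large and `ε` small, has an interior
maximum at a point where `u > v`; there `∇·(a∇·)` of it is nonpositive (`divA_nonpos_of_isLocalMax`),
although the barrier contributes a strictly positive amount (`divA_barrier_pos`).

With `p = -θ > 1`, the function `f z = ν z - z ^ p` is nondecreasing on `[0, hbar]`
(`shifted_power_monotone`) and `f 0 = 0`. All equations have the form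
`∇·(a∇w) = (b + c ν) w - c g`, where `g` is `0` for `Ψ₀`, `f Ψₙ` for `Ψₙ₊₁`, and `f Ψ` for `Ψ`.
A larger `g` therefore gives a larger `w`, and the ordering follows by induction.
-/

open Real Set MeasureTheory Filter Topology

/-- Divergence-form operator `∇·(a∇u)(x) = ∑ i ∂_i (a ∂_i u)(x)`. -/
noncomputable def divA {d : ℕ} (a u : EuclideanSpace ℝ (Fin d) → ℝ)
    (x : EuclideanSpace ℝ (Fin d)) : ℝ :=
  ∑ i : Fin d,
    fderiv ℝ (fun y => a y * fderiv ℝ u y (EuclideanSpace.single i (1 : ℝ))) x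
      (EuclideanSpace.single i (1 : ℝ))

/-- Squared Euclidean norm of the gradient `|∇u|²(x)`. -/
noncomputable def gradSq {d : ℕ} (u : EuclideanSpace ℝ (Fin d) → ℝ)
    (x : EuclideanSpace ℝ (Fin d)) : ℝ :=
  ∑ i : Fin d, (fderiv ℝ u x (EuclideanSpace.single i (1 : ℝ))) ^ 2

/-- Each summand of `divA a u` is nonpositive at an interior maximum, with `a` merely positive:
the flux `a ∂ᵢu` vanishes at a maximum, and were its `i`-th derivative positive, `u` would be
strictly increasing along the `i`-th direction just after the maximum. -/
lemma divA_nonpos_of_isLocalMax {d : ℕ} {Ω : Set (EuclideanSpace ℝ (Fin d))} (hΩ : IsOpen Ω)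
    {a u : EuclideanSpace ℝ (Fin d) → ℝ} (hapos : ∀ x ∈ Ω, 0 < a x)
    (hu : DifferentiableOn ℝ u Ω) {x : EuclideanSpace ℝ (Fin d)} (hx : x ∈ Ω)
    (hmax : IsLocalMax u x) : divA a u x ≤ 0 := by
  refine Finset.sum_nonpos fun i _ => ?_
  set e : EuclideanSpace ℝ (Fin d) := EuclideanSpace.single i (1 : ℝ)
  set F : EuclideanSpace ℝ (Fin d) → ℝ := fun y => a y * fderiv ℝ u y e with hF
  by_contra! hpos
  have hFd : DifferentiableAt ℝ F x := by
    by_contra hnd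
    rw [fderiv_zero_of_not_differentiableAt hnd] at hpos
    simp at hpos
  have hline : ∀ t : ℝ, HasDerivAt (fun s : ℝ => x + s • e) e t := fun t => by
    simpa using ((hasDerivAt_id t).smul_const e).const_add x
  have hF0 : F x = 0 := by simp [hF, hmax.fderiv_eq_zero]
  have hφ : HasDerivAt (fun t : ℝ => F (x + t • e)) (fderiv ℝ F x e) 0 := by
    have h1 : HasFDerivAt F (fderiv ℝ F x) (x + (0 : ℝ) • e) := by
      simpa using hFd.hasFDerivAt
    exact h1.comp_hasDerivAt (0 : ℝ) (hline 0)
  have hcont : Tendsto (fun t : ℝ => x + t • e) (𝓝 0) (𝓝 x) := by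
    simpa using (hline 0).continuousAt.tendsto
  have hin : ∀ᶠ t in 𝓝 (0 : ℝ), x + t • e ∈ Ω := hcont.eventually (hΩ.mem_nhds hx)
  have hle : ∀ᶠ t in 𝓝 (0 : ℝ), u (x + t • e) ≤ u x := hcont.eventually hmax
  have hFpos : ∀ᶠ t in 𝓝[>] (0 : ℝ), 0 < F (x + t • e) := by
    have h1 := hφ.tendsto_slope.eventually (lt_mem_nhds hpos)
    have h2 := h1.filter_mono (nhdsWithin_mono (0 : ℝ) (fun t (ht : 0 < t) => ht.ne'))
    filter_upwards [h2, self_mem_nhdsWithin] with t ht ht0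
    have ht0 : 0 < t := ht0
    rw [slope_def_field] at ht
    simp only [zero_smul, add_zero, hF0, sub_zero] at ht
    exact (div_pos_iff_of_pos_right ht0).1 ht
  have hall : ∀ᶠ t in 𝓝[>] (0 : ℝ), 0 < F (x + t • e) ∧ x + t • e ∈ Ω ∧ u (x + t • e) ≤ u x := by
    filter_upwards [hFpos, nhdsWithin_le_nhds hin, nhdsWithin_le_nhds hle] with t h1 h2 h3
    exact ⟨h1, h2, h3⟩
  obtain ⟨δ, hδ, hsub⟩ := mem_nhdsGT_iff_exists_Ioc_subset.1 hall
  have hδ0 : (0 : ℝ) < δ := hδ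
  have hderiv : ∀ t : ℝ, x + t • e ∈ Ω →
      HasDerivAt (fun s : ℝ => u (x + s • e)) (fderiv ℝ u (x + t • e) e) t := fun t ht =>
    ((hu.differentiableAt (hΩ.mem_nhds ht)).hasFDerivAt).comp_hasDerivAt t (hline t)
  have hinIcc : ∀ t ∈ Icc 0 δ, x + t • e ∈ Ω := by
    intro t ht
    rcases ht.1.eq_or_lt with h0 | h0
    · simpa [← h0] using hx
    · exact (hsub ⟨h0, ht.2⟩).2.1
  have hmono : StrictMonoOn (fun s : ℝ => u (x + s • e)) (Icc 0 δ) := by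
    refine strictMonoOn_of_deriv_pos (convex_Icc 0 δ)
      (fun t ht => (hderiv t (hinIcc t ht)).continuousAt.continuousWithinAt) fun t ht => ?_
    rw [interior_Icc] at ht
    have h1 := hsub (Ioo_subset_Ioc_self ht)
    rw [(hderiv t h1.2.1).deriv]
    exact (pos_iff_pos_of_mul_pos h1.1).1 (hapos _ h1.2.1)
  have := hmono (left_mem_Icc.2 hδ0.le) (right_mem_Icc.2 hδ0.le) hδ0
  simp only [zero_smul, add_zero] at this
  exact absurd (hsub (right_mem_Ioc.2 hδ0)).2.2 (not_le.2 this)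

lemma differentiableAt_flux {d : ℕ} {Ω : Set (EuclideanSpace ℝ (Fin d))} (hΩ : IsOpen Ω)
    {a u : EuclideanSpace ℝ (Fin d) → ℝ} {x : EuclideanSpace ℝ (Fin d)} (hx : x ∈ Ω)
    (ha : DifferentiableAt ℝ a x) (hu : ContDiffOn ℝ 2 u Ω) (e : EuclideanSpace ℝ (Fin d)) :
    DifferentiableAt ℝ (fun y => a y * fderiv ℝ u y e) x := by
  have h1 : ContDiffOn ℝ 1 (fderiv ℝ u) Ω := hu.fderiv_of_isOpen hΩ (by norm_num)
  have h2 : DifferentiableAt ℝ (fderiv ℝ u) x :=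
    (h1.differentiableOn (by norm_num)).differentiableAt (hΩ.mem_nhds hx)
  exact ha.mul (h2.clm_apply (differentiableAt_const e))

lemma divA_sub_add_const_mul {d : ℕ} {Ω : Set (EuclideanSpace ℝ (Fin d))} (hΩ : IsOpen Ω)
    {a u v w : EuclideanSpace ℝ (Fin d) → ℝ} {x : EuclideanSpace ℝ (Fin d)} (hx : x ∈ Ω)
    (ha : DifferentiableAt ℝ a x) (hu : ContDiffOn ℝ 2 u Ω) (hv : ContDiffOn ℝ 2 v Ω)
    (hw : ContDiffOn ℝ 2 w Ω) (ε : ℝ) :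
    divA a (fun y => u y - v y + ε * w y) x = divA a u x - divA a v x + ε * divA a w x := by
  unfold divA
  rw [Finset.mul_sum, ← Finset.sum_sub_distrib, ← Finset.sum_add_distrib]
  refine Finset.sum_congr rfl fun i _ => ?_
  set e : EuclideanSpace ℝ (Fin d) := EuclideanSpace.single i (1 : ℝ)
  have hdiff : ∀ {f : EuclideanSpace ℝ (Fin d) → ℝ}, ContDiffOn ℝ 2 f Ω → ∀ y ∈ Ω,
      DifferentiableAt ℝ f y := fun hf y hy =>
    (hf.differentiableOn (by norm_num)).differentiableAt (hΩ.mem_nhds hy)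
  have heq : (fun y => a y * fderiv ℝ (fun y => u y - v y + ε * w y) y e) =ᶠ[𝓝 x]
      fun y => (a y * fderiv ℝ u y e - a y * fderiv ℝ v y e) + ε * (a y * fderiv ℝ w y e) := by
    filter_upwards [hΩ.mem_nhds hx] with y hy
    have h1 := (((hdiff hu y hy).hasFDerivAt.sub (hdiff hv y hy).hasFDerivAt).add
      ((hdiff hw y hy).hasFDerivAt.const_mul ε)).fderiv
    have h2 : fderiv ℝ (fun y => u y - v y + ε * w y) y
        = fderiv ℝ u y - fderiv ℝ v y + ε • fderiv ℝ w y := h1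
    rw [h2]
    simp only [add_apply, sub_apply,
      smul_apply, smul_eq_mul]
    ring
  rw [heq.fderiv_eq]
  have h3 := (((differentiableAt_flux hΩ hx ha hu e).hasFDerivAt.sub
    (differentiableAt_flux hΩ hx ha hv e).hasFDerivAt).add
      ((differentiableAt_flux hΩ hx ha hw e).hasFDerivAt.const_mul ε)).fderiv
  refine (congrArg (fun L => L e) h3).trans ?_
  simp

lemma hasFDerivAt_barrier {d : ℕ} (j : Fin d) (lam : ℝ) (y : EuclideanSpace ℝ (Fin d)) :
    HasFDerivAt (fun y : EuclideanSpace ℝ (Fin d) => Real.exp (lam * y j))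
      ((Real.exp (lam * y j) * lam) • (EuclideanSpace.proj j : EuclideanSpace ℝ (Fin d) →L[ℝ] ℝ))
      y := by
  have h1 : HasFDerivAt (fun y : EuclideanSpace ℝ (Fin d) => y j)
      (EuclideanSpace.proj j : EuclideanSpace ℝ (Fin d) →L[ℝ] ℝ) y :=
    (EuclideanSpace.proj j : EuclideanSpace ℝ (Fin d) →L[ℝ] ℝ).hasFDerivAt
  have h2 := (h1.const_mul lam).exp
  rwa [smul_smul] at h2

/-- Only the `j`-th summand survives, and it equals `lam * exp (lam * x j) * (∂ⱼa + lam * a)`. -/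
lemma divA_barrier_pos {d : ℕ} (j : Fin d) {a : EuclideanSpace ℝ (Fin d) → ℝ}
    {x : EuclideanSpace ℝ (Fin d)} (ha : DifferentiableAt ℝ a x) {lam : ℝ} (hlam : 0 < lam)
    (hpos : 0 < fderiv ℝ a x (EuclideanSpace.single j (1 : ℝ)) + lam * a x) :
    0 < divA a (fun y => Real.exp (lam * y j)) x := by
  unfold divA
  simp only [fun y => (hasFDerivAt_barrier j lam y).fderiv]
  rw [Finset.sum_eq_single j]
  · have h := (ha.hasFDerivAt.mul ((hasFDerivAt_barrier j lam x).mul_const lam)).fderiv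
    have hfun : (fun y : EuclideanSpace ℝ (Fin d) => a y * ((Real.exp (lam * y j) * lam) •
        (EuclideanSpace.proj j : EuclideanSpace ℝ (Fin d) →L[ℝ] ℝ))
          (EuclideanSpace.single j (1 : ℝ))) = fun y => a y * (Real.exp (lam * y j) * lam) := by
      funext y; simp
    rw [hfun]
    refine lt_of_lt_of_eq ?_ (congrArg (fun L => L (EuclideanSpace.single j (1 : ℝ))) h).symm
    have : 0 < lam * Real.exp (lam * x j) *
        (fderiv ℝ a x (EuclideanSpace.single j (1 : ℝ)) + lam * a x) := by positivity
    refine lt_of_lt_of_eq this ?_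
    simp
    ring
  · intro i _ hij
    have hfun : (fun y : EuclideanSpace ℝ (Fin d) => a y * ((Real.exp (lam * y j) * lam) •
        (EuclideanSpace.proj j : EuclideanSpace ℝ (Fin d) →L[ℝ] ℝ))
          (EuclideanSpace.single i (1 : ℝ))) = fun _ => 0 := by
      funext y; simp [hij.symm]
    rw [hfun]
    simp
  · simp

/-- Weak maximum principle, for the difference of two functions that agree on the boundary. -/
lemma comparison {d : ℕ} (hd : 1 ≤ d) {Ω U : Set (EuclideanSpace ℝ (Fin d))}
    (hΩo : IsOpen Ω) (hΩb : Bornology.IsBounded Ω) (hU : IsOpen U) (hUΩ : closure Ω ⊆ U)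
    {a : EuclideanSpace ℝ (Fin d) → ℝ} (ha : ContDiffOn ℝ 1 a U) {a₀ : ℝ} (ha₀ : 0 < a₀)
    (halb : ∀ x ∈ Ω, a₀ ≤ a x) {u v : EuclideanSpace ℝ (Fin d) → ℝ}
    (hu : ContDiffOn ℝ 2 u Ω) (hv : ContDiffOn ℝ 2 v Ω)
    (huc : ContinuousOn u (closure Ω)) (hvc : ContinuousOn v (closure Ω))
    (hbd : ∀ x ∈ frontier Ω, u x = v x)
    (hdiv : ∀ x ∈ Ω, v x < u x → divA a v x ≤ divA a u x) :
    ∀ x ∈ Ω, u x ≤ v x := by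
  intro x₁ hx₁
  by_contra! hlt
  have hK : IsCompact (closure Ω) := hΩb.isCompact_closure
  let j : Fin d := ⟨0, hd⟩
  set e : EuclideanSpace ℝ (Fin d) := EuclideanSpace.single j (1 : ℝ)
  have hadiff : ∀ x ∈ Ω, DifferentiableAt ℝ a x := fun x hx =>
    (ha.differentiableOn (by norm_num)).differentiableAt
      (hU.mem_nhds (hUΩ (subset_closure hx)))
  obtain ⟨C, hC⟩ : ∃ C, ∀ x ∈ closure Ω, ‖fderiv ℝ a x e‖ ≤ C :=
    hK.exists_bound_of_continuousOn
      (((ha.continuousOn_fderiv_of_isOpen hU (by norm_num)).mono hUΩ).clm_apply continuousOn_const)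
  have hC0 : 0 ≤ C := (norm_nonneg _).trans (hC x₁ (subset_closure hx₁))
  set lam : ℝ := (C + 1) / a₀ with hlamdef
  have hlam : 0 < lam := by positivity
  let E : EuclideanSpace ℝ (Fin d) → ℝ := fun y => Real.exp (lam * y j)
  have hE : ContDiff ℝ 2 E := by
    have : ContDiff ℝ 2 (fun y : EuclideanSpace ℝ (Fin d) => y j) :=
      (EuclideanSpace.proj j : EuclideanSpace ℝ (Fin d) →L[ℝ] ℝ).contDiff
    exact (contDiff_const.mul this).exp
  obtain ⟨B, hB⟩ := hK.exists_bound_of_continuousOn hE.continuous.continuousOn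
  have hB0 : 0 ≤ B := (norm_nonneg _).trans (hB x₁ (subset_closure hx₁))
  -- `ε * E` stays below the gap `u x₁ - v x₁`, so a maximum of `W` must lie where `u > v`.
  set ε : ℝ := (u x₁ - v x₁) / (B + 1) with hεdef
  have hε : 0 < ε := div_pos (sub_pos.2 hlt) (by positivity)
  have hεB : ε * (B + 1) = u x₁ - v x₁ := div_mul_cancel₀ _ (by positivity)
  let W : EuclideanSpace ℝ (Fin d) → ℝ := fun y => u y - v y + ε * E y
  have hWc : ContinuousOn W (closure Ω) :=
    (huc.sub hvc).add (continuousOn_const.mul hE.continuous.continuousOn)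
  obtain ⟨x, hxK, hxmax⟩ := hK.exists_isMaxOn ⟨x₁, subset_closure hx₁⟩ hWc
  have huv : v x < u x := by
    have h1 : u x₁ - v x₁ + ε * E x₁ ≤ u x - v x + ε * E x := hxmax (subset_closure hx₁)
    have h2 : 0 < ε * E x₁ := mul_pos hε (Real.exp_pos _)
    have h3 : ε * E x ≤ ε * B := mul_le_mul_of_nonneg_left ((le_abs_self _).trans (hB x hxK)) hε.le
    linarith
  have hx : x ∈ Ω := by
    by_contra hn
    refine huv.ne' (hbd x ⟨hxK, ?_⟩)
    rwa [hΩo.interior_eq]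
  have hW2 : ContDiffOn ℝ 2 W Ω := (hu.sub hv).add (contDiffOn_const.mul hE.contDiffOn)
  have hneg : divA a W x ≤ 0 :=
    divA_nonpos_of_isLocalMax hΩo (fun y hy => ha₀.trans_le (halb y hy))
      (hW2.differentiableOn (by norm_num)) hx
      (hxmax.isLocalMax (mem_of_superset (hΩo.mem_nhds hx) subset_closure))
  have hWeq : divA a W x = divA a u x - divA a v x + ε * divA a E x :=
    divA_sub_add_const_mul hΩo hx (hadiff x hx) hu hv hE.contDiffOn ε
  have hEpos : 0 < divA a E x := by
    refine divA_barrier_pos j (hadiff x hx) hlam ?_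
    have h1 := neg_le_of_abs_le (hC x hxK)
    have h2 : lam * a₀ ≤ lam * a x := mul_le_mul_of_nonneg_left (halb x hx) hlam.le
    have h3 : lam * a₀ = C + 1 := div_mul_cancel₀ _ ha₀.ne'
    linarith
  have := mul_pos hε hEpos
  linarith [hdiv x hx huv]

/-- The derivative `p * hbar ^ (p - 1) - p * z ^ (p - 1)`, with `p = -θ`, is nonnegative
on `[0, hbar]`. -/
lemma shifted_power_monotone {θ hbar ν : ℝ} (hθ : θ < -1) (hν : ν = -θ * hbar ^ (-(1 + θ))) :
    MonotoneOn (fun z : ℝ => ν * z - z ^ (-θ)) (Icc 0 hbar) := by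
  have hder : ∀ z : ℝ, HasDerivAt (fun z : ℝ => ν * z - z ^ (-θ))
      (ν * 1 - -θ * z ^ (-θ - 1)) z := fun z =>
    ((hasDerivAt_id z).const_mul ν).sub (Real.hasDerivAt_rpow_const (Or.inr (by linarith)))
  refine monotoneOn_of_deriv_nonneg (convex_Icc 0 hbar)
    (fun z _ => (hder z).continuousAt.continuousWithinAt)
    (fun z _ => (hder z).differentiableAt.differentiableWithinAt) fun z hz => ?_
  rw [interior_Icc] at hz
  rw [(hder z).deriv, hν, show -(1 + θ) = -θ - 1 by ring, mul_one, ← mul_sub]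
  exact mul_nonneg (by linarith)
    (sub_nonneg.2 (Real.rpow_le_rpow hz.1.le hz.2.le (by linarith)))

theorem stmt16 {d : ℕ} (hd : 1 ≤ d) (Ω U : Set (EuclideanSpace ℝ (Fin d)))
    (hΩo : IsOpen Ω) (hΩb : Bornology.IsBounded Ω)
    (hU : IsOpen U) (hUΩ : closure Ω ⊆ U)
    (a b c : EuclideanSpace ℝ (Fin d) → ℝ)
    (ha : ContDiffOn ℝ 1 a U) (a₀ : ℝ) (ha₀ : 0 < a₀) (halb : ∀ x ∈ Ω, a₀ ≤ a x)
    (hbcont : ContinuousOn b (closure Ω)) (hccont : ContinuousOn c (closure Ω))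
    (θ : ℝ) (hθ : θ < -1)
    (hbnn : ∀ x ∈ Ω, 0 ≤ b x) (hcnn : ∀ x ∈ Ω, 0 ≤ c x)
    (h : EuclideanSpace ℝ (Fin d) → ℝ) (hhpos : ∀ x ∈ frontier Ω, 0 < h x)
    (hbar : ℝ) (hhbar : IsLUB (h '' frontier Ω) hbar)
    (ν : ℝ) (hν : ν = -θ * hbar ^ (-(1 + θ)))
    (Ψ : EuclideanSpace ℝ (Fin d) → ℝ)
    (hΨ2 : ContDiffOn ℝ 2 Ψ Ω) (hΨ1 : ContDiffOn ℝ 1 Ψ (closure Ω))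
    (hΨpos : ∀ x ∈ closure Ω, 0 < Ψ x) (hΨub : ∀ x ∈ closure Ω, Ψ x ≤ hbar)
    (hΨeq : ∀ x ∈ Ω, divA a Ψ x = b x * Ψ x + c x * Ψ x ^ (-θ))
    (hΨbd : ∀ x ∈ frontier Ω, Ψ x = h x)
    (Ψseq : ℕ → EuclideanSpace ℝ (Fin d) → ℝ)
    (hseq2 : ∀ n, ContDiffOn ℝ 2 (Ψseq n) Ω)
    (hseq1 : ∀ n, ContDiffOn ℝ 1 (Ψseq n) (closure Ω))
    (hseq0 : ∀ x ∈ Ω, -divA a (Ψseq 0) x + (b x + c x * ν) * Ψseq 0 x = 0)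
    (hseq0bounds : ∀ x ∈ closure Ω, 0 ≤ Ψseq 0 x ∧ Ψseq 0 x ≤ hbar)
    (hseqnn : ∀ n : ℕ, ∀ x ∈ closure Ω, 0 ≤ Ψseq (n + 1) x)
    (hseqn : ∀ n : ℕ, ∀ x ∈ Ω,
      -divA a (Ψseq (n + 1)) x + (b x + c x * ν) * Ψseq (n + 1) x
        = -c x * ((Ψseq n x) ^ (-θ) - ν * Ψseq n x))
    (hseqbd : ∀ n, ∀ x ∈ frontier Ω, Ψseq n x = h x) :
    (∀ n : ℕ, ∀ x ∈ Ω, Ψseq n x ≤ Ψseq (n + 1) x ∧ Ψseq (n + 1) x ≤ Ψ x) ∧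
      ∀ x ∈ Ω, ∃ L : ℝ, L ≤ Ψ x ∧
        Filter.Tendsto (fun n => Ψseq n x) Filter.atTop (nhds L) := by
  have hmono := shifted_power_monotone hθ hν
  set f : ℝ → ℝ := fun z => ν * z - z ^ (-θ) with hf
  have hf0 : f 0 = 0 := by simp [hf, Real.zero_rpow (show -θ ≠ 0 by linarith)]
  have hbarpos : ∀ x ∈ Ω, 0 < hbar := fun x hx =>
    (hΨpos x (subset_closure hx)).trans_le (hΨub x (subset_closure hx))
  have hk : ∀ x ∈ Ω, 0 ≤ b x + c x * ν := fun x hx => by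
    have : 0 ≤ ν := by
      rw [hν]
      exact mul_nonneg (by linarith) (Real.rpow_nonneg (hbarpos x hx).le _)
    exact add_nonneg (hbnn x hx) (mul_nonneg (hcnn x hx) this)
  have hfnn : ∀ x ∈ Ω, ∀ z, 0 ≤ z → z ≤ hbar → 0 ≤ f z := fun x hx z h0 h1 =>
    hf0 ▸ hmono (left_mem_Icc.2 (hbarpos x hx).le) ⟨h0, h1⟩ h0
  have hnn : ∀ n, ∀ x ∈ Ω, 0 ≤ Ψseq n x := by
    intro n x hx
    cases n with
    | zero => exact (hseq0bounds x (subset_closure hx)).1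
    | succ n => exact hseqnn n x (subset_closure hx)
  -- For two solutions of `∇·(a∇w) = (b + c ν) w - c g`, the larger `g` gives the larger `w`.
  have key : ∀ u v gu gv : EuclideanSpace ℝ (Fin d) → ℝ,
      ContDiffOn ℝ 2 u Ω → ContDiffOn ℝ 2 v Ω →
      ContDiffOn ℝ 1 u (closure Ω) → ContDiffOn ℝ 1 v (closure Ω) →
      (∀ x ∈ frontier Ω, u x = h x) → (∀ x ∈ frontier Ω, v x = h x) →
      (∀ x ∈ Ω, divA a u x = (b x + c x * ν) * u x - c x * gu x) →
      (∀ x ∈ Ω, divA a v x = (b x + c x * ν) * v x - c x * gv x) →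
      (∀ x ∈ Ω, gu x ≤ gv x) → ∀ x ∈ Ω, u x ≤ v x := by
    intro u v gu gv hu hv hu1 hv1 hub hvb heu hev hg
    refine comparison hd hΩo hΩb hU hUΩ ha ha₀ halb hu hv hu1.continuousOn hv1.continuousOn
      (fun x hx => (hub x hx).trans (hvb x hx).symm) fun x hx hlt => ?_
    rw [heu x hx, hev x hx]
    have h1 := mul_le_mul_of_nonneg_left hlt.le (hk x hx)
    have h2 := mul_le_mul_of_nonneg_left (hg x hx) (hcnn x hx)
    linarith
  have e0 : ∀ x ∈ Ω, divA a (Ψseq 0) x = (b x + c x * ν) * Ψseq 0 x - c x * 0 := fun x hx => by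
    linarith [hseq0 x hx]
  have en : ∀ n, ∀ x ∈ Ω, divA a (Ψseq (n + 1)) x
      = (b x + c x * ν) * Ψseq (n + 1) x - c x * f (Ψseq n x) := fun n x hx => by
    simp only [hf]
    linarith [hseqn n x hx]
  have eΨ : ∀ x ∈ Ω, divA a Ψ x = (b x + c x * ν) * Ψ x - c x * f (Ψ x) := fun x hx => by
    simp only [hf]
    linarith [hΨeq x hx]
  have hub : ∀ n, ∀ x ∈ Ω, Ψseq n x ≤ Ψ x := by
    intro n
    induction n with
    | zero =>
      exact key _ _ (fun _ => 0) (fun x => f (Ψ x)) (hseq2 0) hΨ2 (hseq1 0) hΨ1 (hseqbd 0) hΨbd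
        e0 eΨ fun x hx =>
          hfnn x hx _ (hΨpos x (subset_closure hx)).le (hΨub x (subset_closure hx))
    | succ n ih =>
      exact key _ _ (fun x => f (Ψseq n x)) (fun x => f (Ψ x)) (hseq2 _) hΨ2 (hseq1 _) hΨ1
        (hseqbd _) hΨbd (en n) eΨ fun x hx =>
          have hx' := hΨub x (subset_closure hx)
          hmono ⟨hnn n x hx, (ih x hx).trans hx'⟩ ⟨(hΨpos x (subset_closure hx)).le, hx'⟩ (ih x hx)
  have hup : ∀ n, ∀ x ∈ Ω, Ψseq n x ≤ Ψseq (n + 1) x := by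
    intro n
    induction n with
    | zero =>
      exact key _ _ (fun _ => 0) (fun x => f (Ψseq 0 x)) (hseq2 0) (hseq2 1) (hseq1 0) (hseq1 1)
        (hseqbd 0) (hseqbd 1) e0 (en 0) fun x hx =>
          hfnn x hx _ (hnn 0 x hx) (hseq0bounds x (subset_closure hx)).2
    | succ n ih =>
      exact key _ _ (fun x => f (Ψseq n x)) (fun x => f (Ψseq (n + 1) x)) (hseq2 _) (hseq2 _)
        (hseq1 _) (hseq1 _) (hseqbd _) (hseqbd _) (en n) (en (n + 1)) fun x hx =>
          have hx' := hΨub x (subset_closure hx)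
          hmono ⟨hnn n x hx, (hub n x hx).trans hx'⟩
            ⟨hnn (n + 1) x hx, (hub (n + 1) x hx).trans hx'⟩ (ih x hx)
  refine ⟨fun n x hx => ⟨hup n x hx, hub (n + 1) x hx⟩, fun x hx => ?_⟩
  exact ⟨⨆ n, Ψseq n x, ciSup_le fun n => hub n x hx,
    tendsto_atTop_ciSup (monotone_nat_of_le_succ fun n => hup n x hx)
      ⟨Ψ x, by rintro _ ⟨n, rfl⟩; exact hub n x hx⟩⟩
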